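/- A quasigroup is distributive if and only if it is trimedial and idempotent. -/

import Mathlib

/-- A quasigroup: a set with a binary operation whose left and right
translations are bijections. -/
structure Quasigroup (Q : Type) where
  mul : Q → Q → Q
  leftBij : ∀ x, Function.Bijective fun y => mul x y
  rightBij : ∀ x, Function.Bijective fun y => mul y x

namespace Quasigroup

/-- Mediality: (x*y)*(u*v) = (x*u)*(y*v). -/
def Medial {Q : Type} (q : Quasigroup Q) : Prop :=
  ∀ x y u v, q.mul (q.mul x y) (q.mul u v) = q.mul (q.mul x u) (q.mul y v)

/-- Distributivity: both left and right self-distributivity. -/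
def Distributive {Q : Type} (q : Quasigroup Q) : Prop :=
  (∀ x y z, q.mul x (q.mul y z) = q.mul (q.mul x y) (q.mul x z)) ∧
  (∀ x y z, q.mul (q.mul x y) z = q.mul (q.mul x z) (q.mul y z))

/-- Idempotency: x*x = x. -/
def Idempotent {Q : Type} (q : Quasigroup Q) : Prop := ∀ x, q.mul x x = x

/-- Mendelsohn quasigroup: idempotent and semisymmetric. -/
def Mendelsohn {Q : Type} (q : Quasigroup Q) : Prop :=
  Idempotent q ∧ ∀ x y, q.mul y (q.mul x y) = x

/-- A subquasigroup: a subset closed under multiplication, left division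
and right division. -/
def IsSubquasigroup {Q : Type} (q : Quasigroup Q) (S : Set Q) : Prop :=
  (∀ x ∈ S, ∀ y ∈ S, q.mul x y ∈ S) ∧
  (∀ x ∈ S, ∀ z ∈ S, ∀ y, q.mul x y = z → y ∈ S) ∧
  (∀ y ∈ S, ∀ z ∈ S, ∀ x, q.mul x y = z → x ∈ S)

/-- The smallest subquasigroup containing `a`, `b`, `c`. -/
def genSet {Q : Type} (q : Quasigroup Q) (a b c : Q) : Set Q :=
  ⋂₀ {S : Set Q | IsSubquasigroup q S ∧ a ∈ S ∧ b ∈ S ∧ c ∈ S}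

/-- Trimediality: every subquasigroup generated by three elements is medial. -/
def Trimedial {Q : Type} (q : Quasigroup Q) : Prop :=
  ∀ a b c : Q, ∀ x ∈ genSet q a b c, ∀ y ∈ genSet q a b c,
    ∀ u ∈ genSet q a b c, ∀ v ∈ genSet q a b c,
      q.mul (q.mul x y) (q.mul u v) = q.mul (q.mul x u) (q.mul y v)

/-- Isomorphism of quasigroups. -/
def Iso {Q₁ Q₂ : Type} (q₁ : Quasigroup Q₁) (q₂ : Quasigroup Q₂) : Prop :=
  ∃ f : Q₁ ≃ Q₂, ∀ x y, f (q₁.mul x y) = q₂.mul (f x) (f y)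

end Quasigroup

namespace Quasigroup

theorem lcancel {Q : Type} (q : Quasigroup Q) {a x y : Q} (h : q.mul a x = q.mul a y) : x = y :=
  (q.leftBij a).1 h

theorem rcancel {Q : Type} (q : Quasigroup Q) {a x y : Q} (h : q.mul x a = q.mul y a) : x = y :=
  (q.rightBij a).1 h

/-- The equalizer of two endomorphisms is a subquasigroup. -/
theorem equalizer_sub {Q : Type} (q : Quasigroup Q) (f g : Q → Q)
    (hf : ∀ x y, f (q.mul x y) = q.mul (f x) (f y))
    (hg : ∀ x y, g (q.mul x y) = q.mul (g x) (g y)) :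
    IsSubquasigroup q {x | f x = g x} := by
  refine ⟨?_, ?_, ?_⟩
  · intro x hx y hy
    simp only [Set.mem_ofPred_eq] at *
    rw [hf, hg, hx, hy]
  · intro x hx z hz y h
    simp only [Set.mem_ofPred_eq] at *
    subst h
    rw [hf, hg, hx] at hz
    exact q.lcancel hz
  · intro x hx z hz y h
    simp only [Set.mem_ofPred_eq] at *
    subst h
    rw [hf, hg, hx] at hz
    exact q.rcancel hz

theorem genSet_subset {Q : Type} (q : Quasigroup Q) {a b c : Q} {S : Set Q}
    (hS : IsSubquasigroup q S) (ha : a ∈ S) (hb : b ∈ S) (hc : c ∈ S) :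
    ∀ x ∈ genSet q a b c, x ∈ S :=
  fun _ hx => hx S ⟨hS, ha, hb, hc⟩

theorem genSet_mul {Q : Type} (q : Quasigroup Q) {a b c x y : Q}
    (hx : x ∈ genSet q a b c) (hy : y ∈ genSet q a b c) : q.mul x y ∈ genSet q a b c :=
  fun S hS => hS.1.1 x (hx S hS) y (hy S hS)

theorem mem1 {Q : Type} (q : Quasigroup Q) (a b c : Q) : a ∈ genSet q a b c :=
  fun _ hS => hS.2.1
theorem mem2 {Q : Type} (q : Quasigroup Q) (a b c : Q) : b ∈ genSet q a b c :=
  fun _ hS => hS.2.2.1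
theorem mem3 {Q : Type} (q : Quasigroup Q) (a b c : Q) : c ∈ genSet q a b c :=
  fun _ hS => hS.2.2.2

theorem idem_of_dist {Q : Type} (q : Quasigroup Q) (h : Distributive q) : Idempotent q :=
  fun x => (q.rcancel (h.1 x x x)).symm

/-- A loop isotope at `e`: all properties used. -/
theorem exists_loop {Q : Type} (q : Quasigroup Q) (h : Distributive q) (e : Q) :
    ∃ add : Q → Q → Q,
      (∀ x y, q.mul x y = add (q.mul x e) (q.mul e y)) ∧
      (∀ x, add x e = x) ∧ (∀ x, add e x = x) ∧
      (∀ a y z, add a (q.mul y z) = q.mul (add a y) (add a z)) ∧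
      (∀ a y z, add (q.mul y z) a = q.mul (add y a) (add z a)) ∧
      (∀ x y, q.mul (add x y) e = add (q.mul x e) (q.mul y e)) ∧
      (∀ x y, q.mul e (add x y) = add (q.mul e x) (q.mul e y)) ∧
      (∀ a x y, add a x = add a y → x = y) ∧
      (∀ a x, ∃ t, add t a = x) := by
  have hi := idem_of_dist q h
  obtain ⟨hl, hr⟩ := h
  choose rd hrd using (q.rightBij e).2
  choose ld hld using (q.leftBij e).2
  simp only at hrd hld
  have rd_mul : ∀ x, rd (q.mul x e) = x := fun x => q.rcancel (hrd _)
  have ld_mul : ∀ x, ld (q.mul e x) = x := fun x => q.lcancel (hld _)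
  have rde : rd e = e := q.rcancel (a := e) (by rw [hrd, hi])
  have lde : ld e = e := q.lcancel (a := e) (by rw [hld, hi])
  have ld_hom : ∀ x y, ld (q.mul x y) = q.mul (ld x) (ld y) := fun x y =>
    q.lcancel (a := e) (by rw [hld, hl, hld, hld])
  have rd_hom : ∀ x y, rd (q.mul x y) = q.mul (rd x) (rd y) := fun x y =>
    q.rcancel (a := e) (by rw [hrd, hr, hrd, hrd])
  refine ⟨fun x y => q.mul (rd x) (ld y), ?_, ?_, ?_, ?_, ?_, ?_, ?_, ?_, ?_⟩
  · intro x y; simp only [rd_mul, ld_mul]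
  · intro x; simp only [lde, hrd]
  · intro x; simp only [rde, hld]
  · intro a y z; simp only [ld_hom]; exact hl _ _ _
  · intro a y z; simp only [rd_hom]; exact hr _ _ _
  · intro x y; simp only [rd_mul, ld_hom, lde]; rw [hr, hrd]
  · intro x y; simp only [ld_mul, rd_hom, rde]; rw [hl, hld]
  · intro a x y hh
    have := q.lcancel hh
    rw [← hld x, this, hld]
  · intro a x
    obtain ⟨s, hs⟩ := (q.rightBij (ld a)).2 x
    exact ⟨q.mul s e, by simpa only [rd_mul] using hs⟩

theorem trimedial_of_dist {Q : Type} (q : Quasigroup Q) (h : Distributive q) : Trimedial q := by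
  intro e b c
  have hi := idem_of_dist q h
  obtain ⟨add, hm, hxe, hex, hL, hR, hphi, hpsi, hcan, hsol⟩ := exists_loop q h e
  obtain ⟨hl, hr⟩ := h
  -- commutativity
  have key : ∀ a x t, add t a = add a x → add t (q.mul a e) = add (q.mul a e) x := by
    intro a x t ht
    obtain ⟨s, hs⟩ := hsol a (add a x)
    obtain ⟨x', hx'⟩ := (q.rightBij e).2 x
    obtain ⟨t', ht'⟩ := (q.rightBij e).2 t
    simp only at hx' ht'
    subst hx'; subst ht'
    rw [hL, hR, hxe, hex] at ht
    have := q.rcancel ht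
    rw [← hphi, ← hphi, this]
  have comm : ∀ a x, add a x = add x a := by
    intro a x
    obtain ⟨t, ht⟩ := hsol a (add a x)
    have h1 := key a x t ht
    rw [hL, hR, hxe, hex, ht] at h1
    have h2 := q.lcancel h1
    rw [h2] at ht
    exact ht.symm
  -- translations are endomorphisms; trilinearity of the associativity relation
  have lin1 : ∀ u v, IsSubquasigroup q {y | add y (add u v) = add u (add y v)} := fun u v =>
    equalizer_sub q (fun y => add y (add u v)) (fun y => add u (add y v))
      (fun x y => hR _ _ _) (fun x y => by simp only [hR, hL])
  have lin2 : ∀ y v, IsSubquasigroup q {u | add y (add u v) = add u (add y v)} := fun y v =>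
    equalizer_sub q (fun u => add y (add u v)) (fun u => add u (add y v))
      (fun x y => by simp only [hR, hL]) (fun x y => hR _ _ _)
  have lin3 : ∀ y u, IsSubquasigroup q {v | add y (add u v) = add u (add y v)} := fun y u =>
    equalizer_sub q (fun v => add y (add u v)) (fun v => add u (add y v))
      (fun x y => by simp only [hL]) (fun x y => by simp only [hL])
  have t1 : ∀ u v, add e (add u v) = add u (add e v) := fun u v => by rw [hex, hex]
  have t2 : ∀ y v, add y (add e v) = add e (add y v) := fun u v => by rw [hex, hex]
  have t3 : ∀ y u, add y (add u e) = add u (add y e) := fun u v => by rw [hxe, hxe, comm]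
  -- alternativity
  have alt0 : ∀ x y, add (q.mul x e) (add y (q.mul e x)) = add y (add (q.mul x e) (q.mul e x)) := by
    intro x y
    obtain ⟨w, hw⟩ := (q.leftBij e).2 y
    simp only at hw
    subst hw
    rw [← hm x x, hi, comm (q.mul e w) x, hL x, hxe, hm x (add x w), hpsi,
      comm (q.mul e w) (q.mul e x)]
  have alt : ∀ x y, add x (add y x) = add y (add x x) := by
    intro x y
    have h1 : add (q.mul x e) (add y x) = add y (add (q.mul x e) x) :=
      (lin3 (q.mul x e) y).2.1 e (t3 _ _) _ (alt0 x y) x rfl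
    exact (lin1 y x).2.2 e (t1 _ _) _ h1 x rfl
  have T : ∀ y ∈ genSet q e b c, ∀ u ∈ genSet q e b c, ∀ v ∈ genSet q e b c,
      add y (add u v) = add u (add y v) := by
    have g : ∀ y, (y = b ∨ y = c) → ∀ u, (u = b ∨ u = c) → ∀ v, (v = b ∨ v = c) →
        add y (add u v) = add u (add y v) := by
      rintro y (rfl | rfl) u (rfl | rfl) v (rfl | rfl) <;>
        first | rfl | exact alt _ _ | exact (alt _ _).symm
    have g1 : ∀ y, (y = b ∨ y = c) → ∀ u, (u = b ∨ u = c) → ∀ v ∈ genSet q e b c,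
        add y (add u v) = add u (add y v) := fun y hy u hu =>
      genSet_subset q (lin3 y u) (t3 _ _) (g y hy u hu _ (.inl rfl)) (g y hy u hu _ (.inr rfl))
    have g2 : ∀ y, (y = b ∨ y = c) → ∀ u ∈ genSet q e b c, ∀ v ∈ genSet q e b c,
        add y (add u v) = add u (add y v) := fun y hy u hu v hv =>
      genSet_subset q (lin2 y v) (t2 _ _) (g1 y hy _ (.inl rfl) v hv)
        (g1 y hy _ (.inr rfl) v hv) u hu
    exact fun y hy u hu v hv =>
      genSet_subset q (lin1 u v) (t1 _ _) (g2 _ (.inl rfl) u hu v hv)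
        (g2 _ (.inr rfl) u hu v hv) y hy
  have hwp0 : ∀ w p, w ∈ genSet q e b c → p ∈ genSet q e b c → add w p ∈ genSet q e b c := by
    intro w p hw hp S hS
    obtain ⟨w', hw'⟩ := (q.rightBij e).2 w
    obtain ⟨p', hp'⟩ := (q.leftBij e).2 p
    simp only at hw' hp'
    have k1 := hS.1.2.2 e hS.2.1 w (hw S hS) w' hw'
    have k2 := hS.1.2.1 e hS.2.1 p (hp S hS) p' hp'
    rw [← hw', ← hp', ← hm]
    exact hS.1.1 _ k1 _ k2
  have swap : ∀ p r s w, p ∈ genSet q e b c → r ∈ genSet q e b c → s ∈ genSet q e b c →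
      w ∈ genSet q e b c → add p r ∈ genSet q e b c → add p s ∈ genSet q e b c →
      add (add p r) (add s w) = add (add p s) (add r w) := by
    intro p r s w hp hr' hs hw h1 h2
    have hwp : add w p ∈ genSet q e b c := hwp0 w p hw hp
    rw [T _ h1 _ hs _ hw, T _ h2 _ hr' _ hw, comm (add p r) w, comm (add p s) w, comm p r,
      comm p s, T _ hw _ hr' _ hp, T _ hw _ hs _ hp, T _ hs _ hr' _ hwp]
  intro x hx y hy u hu v hv
  have he := mem1 q e b c
  have ee : ∀ y, q.mul (q.mul e y) e = q.mul e (q.mul y e) := fun y => by rw [hl e y e, hi]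
  have M := @genSet_mul Q q e b c
  have ex : ∀ x y u v, q.mul (q.mul x y) (q.mul u v) =
      add (add (q.mul (q.mul x e) e) (q.mul e (q.mul y e)))
        (add (q.mul e (q.mul u e)) (q.mul e (q.mul e v))) := by
    intro x y u v
    rw [hm (q.mul x y), hm x y, hphi, ee, hm u v, hpsi]
  rw [ex, ex]
  have cl : ∀ x y, x ∈ genSet q e b c → y ∈ genSet q e b c →
      add (q.mul (q.mul x e) e) (q.mul e (q.mul y e)) ∈ genSet q e b c := by
    intro x y hx hy
    rw [← ee, ← hphi, ← hm]
    exact M (M hx hy) he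
  exact swap _ _ _ _ (M (M hx he) he) (M he (M hy he)) (M he (M hu he)) (M he (M he hv))
    (cl _ _ hx hy) (cl _ _ hx hu)

end Quasigroup

open Quasigroup in
/-- Belousov: a quasigroup is distributive iff it is trimedial and idempotent. -/
theorem stmt {Q : Type} (q : Quasigroup Q) :
    Distributive q ↔ Trimedial q ∧ Idempotent q := by
  constructor
  · exact fun h => ⟨trimedial_of_dist q h, idem_of_dist q h⟩
  · rintro ⟨ht, hi⟩
    constructor
    · intro x y z
      have := ht x y z x (mem1 q _ _ _) x (mem1 q _ _ _) y (mem2 q _ _ _) z (mem3 q _ _ _)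
      rwa [hi x] at this
    · intro x y z
      have := ht x y z x (mem1 q _ _ _) y (mem2 q _ _ _) z (mem3 q _ _ _) z (mem3 q _ _ _)
      rwa [hi z] at this
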